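/- Let A ∈ ℝ^{m×n}, y ∈ ℝ^m, let x* and x^p be k-sparse vectors in ℝⁿ and set η = y − Ax*. Let q ≥ 2k be a positive integer, set t = ⌈q/k⌉, and let δ₁ ≤ δ₂ ≤ δ₃ be restricted isometry constants of orders k, 2k, 3k for A with δ₂ < 1. Let u^p = x^p + h^p, where h^p is a hard thresholding of Aᵀ(y − Ax^p) at level q, and let x^{p+1} = u^p ⊗ w^p, where w^p ∈ {0,1}ⁿ with eᵀw^p = k minimizes ‖y − A(u^p ⊗ w)‖₂² over all w ∈ {0,1}ⁿ with eᵀw = k. Then ‖x^{p+1} − x*‖₂ ≤ ρ·‖x^p − x*‖₂ + τ·‖η‖₂, where ρ = ((√5+1)/2)(t+1)δ₃√((1+δ₁)/(1−δ₂)) and τ = [(√5+1)(t+1)(1+δ₂) + 4]/(2√(1−δ₂)). -/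

import Mathlib

/-!
Let `D = xp - xs`, `g = Aᵀ(y - A xp)` and `r = D + g = (D - AᵀA D) + Aᵀ η`. The restricted isometry
property says that `I - AᵀA` is small on sparse vectors: whenever the support of `D` together with
`T` has at most `3k` indices and `|T| ≤ k`, one has
`‖r_T‖ ≤ E := δ₃ ‖D‖ + √(1 + δ₁) ‖η‖` (`nrm_restr_sub_gram_le`, `nrm_restr_transpose_le`).

Let `u = xp + h`. Choose `S ⊇ supp xs` with `|S| = k`; compare `w` with the indicator of `S`. The vector
`u_S - xs` is `k`-sparse and equals `r_S - g_{S \ Ω}`. Since `|Ω| = q ≥ 2k`, there is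
`T ⊆ Ω \ (S ∪ supp xp)` with `|T| = |S \ Ω|`; the thresholding rule gives `‖g_{S \ Ω}‖ ≤ ‖g_T‖`, and
`g_T = r_T` because `D` vanishes on `T`. Hence `‖u_S - xs‖ ≤ 2 E`. Optimality of `w` yields
`√(1 - δ₂) ‖x⁺ - xs‖ ≤ ‖A (x⁺ - xs)‖ ≤ ‖A (u_S - xs)‖ + 2 ‖η‖ ≤ 2 √(1 + δ₁) E + 2 ‖η‖`
for the new iterate `x⁺`, and `2 ≤ (√5 + 1) / 2 * (t + 1)` finishes the proof. In particular the factor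
`(√5 + 1) / 2 * (t + 1)` is only used through its lower bound `2`.
-/

open Matrix Finset Filter

/-- Euclidean (ℓ₂) norm of a vector. -/
noncomputable def nrm {n : ℕ} (x : Fin n → ℝ) : ℝ := Real.sqrt (∑ i, x i ^ 2)

/-- A vector is `s`-sparse if it has at most `s` nonzero entries. -/
def sparse {n : ℕ} (s : ℕ) (x : Fin n → ℝ) : Prop :=
  ((Finset.univ : Finset (Fin n)).filter fun i => x i ≠ 0).card ≤ s

/-- Support of a vector, as a finset. -/
noncomputable def suppF {n : ℕ} (x : Fin n → ℝ) : Finset (Fin n) :=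
  (Finset.univ : Finset (Fin n)).filter fun i => x i ≠ 0

/-- Restriction of a vector to an index set (zero outside). -/
def restr {n : ℕ} (x : Fin n → ℝ) (Ω : Finset (Fin n)) : Fin n → ℝ :=
  fun i => if i ∈ Ω then x i else 0

/-- `δ ∈ [0,1)` is a restricted isometry constant of order `s` for `A`. -/
def RIC {m n : ℕ} (A : Matrix (Fin m) (Fin n) ℝ) (s : ℕ) (δ : ℝ) : Prop :=
  0 ≤ δ ∧ δ < 1 ∧ ∀ x : Fin n → ℝ, sparse s x →
    (1 - δ) * nrm x ^ 2 ≤ nrm (A.mulVec x) ^ 2 ∧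
      nrm (A.mulVec x) ^ 2 ≤ (1 + δ) * nrm x ^ 2

/-- `h` is a hard thresholding of `z` at level `q` with support `Ω`. -/
def IsHT {n : ℕ} (q : ℕ) (z h : Fin n → ℝ) (Ω : Finset (Fin n)) : Prop :=
  Ω.card = q ∧ (∀ i ∈ Ω, h i = z i) ∧ (∀ i ∉ Ω, h i = 0) ∧
    ∀ i ∈ Ω, ∀ j ∉ Ω, |z j| ≤ |z i|

lemma nrm_nonneg {n : ℕ} (x : Fin n → ℝ) : 0 ≤ nrm x := Real.sqrt_nonneg _

lemma nrm_eq_norm {n : ℕ} (x : Fin n → ℝ) : nrm x = ‖WithLp.toLp 2 x‖ := by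
  simp [nrm, EuclideanSpace.norm_eq]

lemma nrm_sq {n : ℕ} (x : Fin n → ℝ) : nrm x ^ 2 = x ⬝ᵥ x := by
  rw [nrm, Real.sq_sqrt (Finset.sum_nonneg fun i _ => sq_nonneg _)]
  simp [dotProduct, sq]

lemma nrm_add_le {n : ℕ} (x y : Fin n → ℝ) : nrm (x + y) ≤ nrm x + nrm y := by
  simp only [nrm_eq_norm, WithLp.toLp_add]
  exact norm_add_le _ _

lemma nrm_sub_le {n : ℕ} (x y : Fin n → ℝ) : nrm (x - y) ≤ nrm x + nrm y := by
  simp only [nrm_eq_norm, WithLp.toLp_sub]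
  exact norm_sub_le _ _

lemma dotProduct_le_nrm {n : ℕ} (x y : Fin n → ℝ) : x ⬝ᵥ y ≤ nrm x * nrm y := by
  refine le_of_abs_le <| abs_le_of_sq_le_sq ?_ (mul_nonneg (nrm_nonneg _) (nrm_nonneg _))
  rw [mul_pow, nrm_sq, nrm_sq]
  have := Finset.sum_mul_sq_le_sq_mul_sq Finset.univ x y
  simpa [dotProduct, sq] using this

lemma nrm_restr_sq {n : ℕ} (x : Fin n → ℝ) (T : Finset (Fin n)) :
    nrm (restr x T) ^ 2 = ∑ i ∈ T, x i ^ 2 := by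
  rw [nrm_sq]
  simp [dotProduct, restr, sq]

lemma restr_dotProduct_self {n : ℕ} (x : Fin n → ℝ) (T : Finset (Fin n)) :
    restr x T ⬝ᵥ x = nrm (restr x T) ^ 2 := by
  rw [nrm_restr_sq]
  simp [dotProduct, restr, sq]

lemma sparse_of_forall_notMem {n s : ℕ} {x : Fin n → ℝ} (V : Finset (Fin n))
    (hx : ∀ i ∉ V, x i = 0) (hV : V.card ≤ s) : sparse s x := by
  refine le_trans (Finset.card_le_card fun i hi => ?_) hV
  by_contra h
  exact (Finset.mem_filter.1 hi).2 (hx i h)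

lemma RIC.nrm_mulVec_le {m n s : ℕ} {A : Matrix (Fin m) (Fin n) ℝ} {δ : ℝ} (hA : RIC A s δ)
    {x : Fin n → ℝ} (hx : sparse s x) : nrm (A.mulVec x) ≤ Real.sqrt (1 + δ) * nrm x := by
  have h0 : 0 ≤ 1 + δ := by linarith [hA.1]
  refine le_of_abs_le <| abs_le_of_sq_le_sq ?_ (mul_nonneg (Real.sqrt_nonneg _) (nrm_nonneg _))
  rw [mul_pow, Real.sq_sqrt h0]
  exact (hA.2.2 x hx).2

lemma RIC.le_nrm_mulVec {m n s : ℕ} {A : Matrix (Fin m) (Fin n) ℝ} {δ : ℝ} (hA : RIC A s δ)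
    {x : Fin n → ℝ} (hx : sparse s x) : Real.sqrt (1 - δ) * nrm x ≤ nrm (A.mulVec x) := by
  have h0 : 0 ≤ 1 - δ := by linarith [hA.2.1]
  refine le_of_abs_le <| abs_le_of_sq_le_sq ?_ (nrm_nonneg _)
  rw [mul_pow, Real.sq_sqrt h0]
  exact (hA.2.2 x hx).1

/-- Polarized form of the restricted isometry property: on vectors with a common support of size at
most `s`, the bilinear form of `I - AᵀA` is bounded by `δ`. -/
lemma RIC.dotProduct_sub_le {m n s : ℕ} {A : Matrix (Fin m) (Fin n) ℝ} {δ : ℝ} (hA : RIC A s δ)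
    (V : Finset (Fin n)) (hV : V.card ≤ s) {z v : Fin n → ℝ} (hz : ∀ i ∉ V, z i = 0)
    (hv : ∀ i ∉ V, v i = 0) :
    z ⬝ᵥ v - A.mulVec z ⬝ᵥ A.mulVec v ≤ δ * (nrm z * nrm v) := by
  have h0 := hA.1
  -- A quadratic polynomial in `a` that is nonnegative everywhere has nonpositive discriminant.
  have key : ∀ a : ℝ, 0 ≤ (δ * nrm z ^ 2) * (a * a) +
      (-2 * (z ⬝ᵥ v - A.mulVec z ⬝ᵥ A.mulVec v)) * a + δ * nrm v ^ 2 := by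
    intro a
    have hp := (hA.2.2 (a • z + v) (sparse_of_forall_notMem V
      (fun i hi => by simp [hz i hi, hv i hi]) hV)).1
    have hm := (hA.2.2 (a • z - v) (sparse_of_forall_notMem V
      (fun i hi => by simp [hz i hi, hv i hi]) hV)).2
    simp only [nrm_sq, Matrix.mulVec_add, Matrix.mulVec_sub, Matrix.mulVec_smul, dotProduct_add,
      add_dotProduct, dotProduct_sub, sub_dotProduct, dotProduct_smul, smul_dotProduct,
      smul_eq_mul] at hp hm ⊢
    rw [dotProduct_comm v z, dotProduct_comm (A.mulVec v) (A.mulVec z)] at hp hm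
    nlinarith
  have hd := discrim_le_zero key
  rw [discrim] at hd
  refine le_of_abs_le <| abs_le_of_sq_le_sq ?_ (mul_nonneg h0 (mul_nonneg (nrm_nonneg _) (nrm_nonneg _)))
  nlinarith

lemma nrm_restr_sub_gram_le {m n s : ℕ} {A : Matrix (Fin m) (Fin n) ℝ} {δ : ℝ} (hA : RIC A s δ)
    (V T : Finset (Fin n)) (hV : V.card ≤ s) (hT : T ⊆ V) {v : Fin n → ℝ}
    (hv : ∀ i ∉ V, v i = 0) :
    nrm (restr (v - Aᵀ.mulVec (A.mulVec v)) T) ≤ δ * nrm v := by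
  set z := restr (v - Aᵀ.mulVec (A.mulVec v)) T with hzdef
  have hz : ∀ i ∉ V, z i = 0 := fun i hi => by
    simp only [hzdef, restr, if_neg fun h => hi (hT h)]
  have h1 := hA.dotProduct_sub_le V hV hz hv
  have h2 : z ⬝ᵥ v - A.mulVec z ⬝ᵥ A.mulVec v = nrm z ^ 2 := by
    rw [hzdef, ← restr_dotProduct_self, ← hzdef, dotProduct_sub, Matrix.mulVec_transpose,
      dotProduct_comm z (Matrix.vecMul _ _), ← Matrix.dotProduct_mulVec,
      dotProduct_comm (A.mulVec v)]
  by_contra! hlt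
  have : 0 < nrm z := lt_of_le_of_lt (mul_nonneg hA.1 (nrm_nonneg _)) hlt
  nlinarith

lemma nrm_restr_transpose_le {m n s : ℕ} {A : Matrix (Fin m) (Fin n) ℝ} {δ : ℝ} (hA : RIC A s δ)
    (T : Finset (Fin n)) (hT : T.card ≤ s) (η : Fin m → ℝ) :
    nrm (restr (Aᵀ.mulVec η) T) ≤ Real.sqrt (1 + δ) * nrm η := by
  set z := restr (Aᵀ.mulVec η) T with hzdef
  have hz : sparse s z := sparse_of_forall_notMem T (fun i hi => by simp [hzdef, restr, hi]) hT
  have h1 := hA.nrm_mulVec_le hz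
  have h2 : nrm z ^ 2 = η ⬝ᵥ A.mulVec z := by
    rw [hzdef, ← restr_dotProduct_self, ← hzdef, Matrix.mulVec_transpose,
      dotProduct_comm z (Matrix.vecMul _ _), ← Matrix.dotProduct_mulVec]
  have h3 := dotProduct_le_nrm η (A.mulVec z)
  have h4 := mul_le_mul_of_nonneg_left h1 (nrm_nonneg η)
  by_contra! hlt
  have : 0 < nrm z :=
    lt_of_le_of_lt (mul_nonneg (Real.sqrt_nonneg _) (nrm_nonneg _)) hlt
  nlinarith

/-- If every entry of `g` on `T` dominates every entry of `g` on `P`, and `P`, `T` have the same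
size, then `g` restricted to `T` has the larger norm. -/
lemma nrm_restr_le_of_dominated {n : ℕ} (g : Fin n → ℝ) (P T : Finset (Fin n))
    (hc : T.card = P.card) (hd : ∀ i ∈ T, ∀ j ∈ P, |g j| ≤ |g i|) :
    nrm (restr g P) ≤ nrm (restr g T) := by
  refine le_of_abs_le <| abs_le_of_sq_le_sq ?_ (nrm_nonneg _)
  rw [nrm_restr_sq, nrm_restr_sq]
  rcases P.eq_empty_or_nonempty with rfl | hP
  · simpa using Finset.sum_nonneg fun i _ => sq_nonneg (g i)
  obtain ⟨j, hj, hmax⟩ := P.exists_max_image (fun i => g i ^ 2) hP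
  calc ∑ i ∈ P, g i ^ 2 ≤ P.card • (g j ^ 2) := Finset.sum_le_card_nsmul _ _ _ hmax
    _ = T.card • (g j ^ 2) := by rw [hc]
    _ ≤ ∑ i ∈ T, g i ^ 2 :=
      Finset.card_nsmul_le_sum _ _ _ fun i hi => sq_le_sq.2 (hd i hi j hj)

theorem stmt17 {m n : ℕ} (k q : ℕ) (hk : 0 < k) (hq : 2 * k ≤ q)
    (A : Matrix (Fin m) (Fin n) ℝ) (y : Fin m → ℝ)
    (xs xp : Fin n → ℝ) (hxs : sparse k xs) (hxp : sparse k xp)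
    (η : Fin m → ℝ) (hη : η = y - A.mulVec xs)
    (t : ℕ) (ht : t = ⌈(q : ℝ) / (k : ℝ)⌉₊)
    (δ₁ δ₂ δ₃ : ℝ) (h1 : RIC A k δ₁) (h2 : RIC A (2 * k) δ₂) (h3 : RIC A (3 * k) δ₃)
    (h12 : δ₁ ≤ δ₂) (h23 : δ₂ ≤ δ₃)
    (h : Fin n → ℝ) (Ω : Finset (Fin n))
    (hHT : IsHT q (Aᵀ.mulVec (y - A.mulVec xp)) h Ω)
    (w : Fin n → ℝ) (hwbin : ∀ i, w i = 0 ∨ w i = 1) (hwsum : ∑ i, w i = (k : ℝ))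
    (hopt : ∀ w' : Fin n → ℝ, (∀ i, w' i = 0 ∨ w' i = 1) → (∑ i, w' i) = (k : ℝ) →
      nrm (y - A.mulVec (fun i => (xp i + h i) * w i)) ^ 2 ≤
        nrm (y - A.mulVec (fun i => (xp i + h i) * w' i)) ^ 2)
    (ρ τ : ℝ)
    (hρ : ρ = (Real.sqrt 5 + 1) / 2 * ((t : ℝ) + 1) * δ₃ *
      Real.sqrt ((1 + δ₁) / (1 - δ₂)))
    (hτ : τ = ((Real.sqrt 5 + 1) * ((t : ℝ) + 1) * (1 + δ₂) + 4) /
      (2 * Real.sqrt (1 - δ₂))) :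
    nrm ((fun i => (xp i + h i) * w i) - xs) ≤ ρ * nrm (xp - xs) + τ * nrm η := by
  classical
  obtain ⟨hΩc, hΩ1, hΩ0, hΩd⟩ := hHT
  set g := Aᵀ.mulVec (y - A.mulVec xp) with hg
  have hqn : q ≤ n := by simpa [hΩc] using Finset.card_le_univ Ω
  obtain ⟨S, hsS, hSc⟩ := Finset.exists_superset_card_eq (s := suppF xs) (n := k) hxs
    (by simp only [Fintype.card_fin]; omega)
  have hxsS : ∀ i ∉ S, xs i = 0 := fun i hi => by
    by_contra hne
    exact hi (hsS (by simp [suppF, hne]))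
  set U := S ∪ suppF xp with hU
  have hUc : U.card ≤ 2 * k := by
    have h1 := Finset.card_union_le S (suppF xp)
    have h2 : (suppF xp).card ≤ k := hxp
    rw [← hU] at h1
    omega
  set D := xp - xs with hD
  have hDU : ∀ i ∉ U, D i = 0 := fun i hi => by
    simp only [hU, Finset.mem_union, not_or, suppF, Finset.mem_filter, Finset.mem_univ, true_and,
      not_not] at hi
    simp [hD, hi.2, hxsS i hi.1]
  have hgr : D + g = (D - Aᵀ.mulVec (A.mulVec D)) + Aᵀ.mulVec η := by
    have : y - A.mulVec xp = η - A.mulVec D := by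
      rw [hη, hD, Matrix.mulVec_sub]; abel
    rw [hg, this, Matrix.mulVec_sub]; abel
  set E := δ₃ * nrm D + Real.sqrt (1 + δ₁) * nrm η with hE
  have hrE : ∀ T : Finset (Fin n), T.card ≤ k → nrm (restr (D + g) T) ≤ E := by
    intro T hT
    have hsplit : restr (D + g) T =
        restr (D - Aᵀ.mulVec (A.mulVec D)) T + restr (Aᵀ.mulVec η) T := by
      rw [hgr]; ext i; simp only [restr, Pi.add_apply]; split_ifs <;> simp
    rw [hsplit]
    refine (nrm_add_le _ _).trans (add_le_add ?_ (nrm_restr_transpose_le h1 T hT η))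
    refine nrm_restr_sub_gram_le h3 (U ∪ T) T ?_ Finset.subset_union_right
      fun i hi => hDU i fun hiU => hi (Finset.mem_union_left _ hiU)
    have := Finset.card_union_le U T
    omega
  -- `|Ω| ≥ 2k ≥ |U|` leaves at least `|U \ Ω| ≥ |S \ Ω|` indices of `Ω` outside `U`.
  obtain ⟨T, hTs, hTc⟩ := Finset.exists_subset_card_eq (s := Ω \ U) (n := (S \ Ω).card) (by
    have h1 : (S \ Ω).card ≤ (U \ Ω).card :=
      Finset.card_le_card (Finset.sdiff_subset_sdiff Finset.subset_union_left le_rfl)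
    have h2 := Finset.card_sdiff_add_card_inter U Ω
    have h3 := Finset.card_sdiff_add_card_inter Ω U
    rw [Finset.inter_comm] at h3
    omega)
  have hgP : nrm (restr g (S \ Ω)) ≤ E := by
    refine (nrm_restr_le_of_dominated g _ T hTc fun i hi j hj => hΩd i
      (Finset.mem_sdiff.1 (hTs hi)).1 j (Finset.mem_sdiff.1 hj).2).trans ?_
    have hgT : restr g T = restr (D + g) T := by
      ext i
      by_cases hi : i ∈ T
      · simp [restr, hi, hDU i (Finset.mem_sdiff.1 (hTs hi)).2]
      · simp [restr, hi]
    rw [hgT]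
    refine hrE T ?_
    rw [hTc, ← hSc]
    exact Finset.card_le_card Finset.sdiff_subset
  set w' : Fin n → ℝ := fun i => if i ∈ S then 1 else 0 with hw'
  set v : Fin n → ℝ := fun i => (xp i + h i) * w' i with hv
  set x' : Fin n → ℝ := fun i => (xp i + h i) * w i with hx'
  have hvdec : v - xs = restr (D + g) S - restr g (S \ Ω) := by
    ext i
    by_cases hiS : i ∈ S
    · by_cases hiΩ : i ∈ Ω
      · simp [hv, hw', restr, hiS, hiΩ, hΩ1 i hiΩ, hD]; ring
      · simp [hv, hw', restr, hiS, hiΩ, hΩ0 i hiΩ, hD]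
    · simp [hv, hw', restr, hiS, hxsS i hiS]
  have hvE : nrm (v - xs) ≤ 2 * E := by
    rw [hvdec]
    linarith [nrm_sub_le (restr (D + g) S) (restr g (S \ Ω)), hrE S hSc.le]
  have hvsp : sparse k (v - xs) :=
    sparse_of_forall_notMem S (fun i hi => by simp [hv, hw', hi, hxsS i hi]) hSc.le
  have hAv := h1.nrm_mulVec_le hvsp
  have hwc : ((Finset.univ.filter fun i => w i ≠ 0).card : ℝ) = k := by
    rw [← hwsum, Finset.card_filter]
    push_cast
    refine Finset.sum_congr rfl fun i _ => ?_
    rcases hwbin i with hi | hi <;> simp [hi]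
  have hx'sp : sparse (2 * k) (x' - xs) := by
    refine sparse_of_forall_notMem ((Finset.univ.filter fun i => w i ≠ 0) ∪ S) (fun i hi => ?_) ?_
    · simp only [Finset.mem_union, Finset.mem_filter, Finset.mem_univ, true_and, not_or,
        not_not] at hi
      simp [hx', hi.1, hxsS i hi.2]
    · have h1 := Finset.card_union_le (Finset.univ.filter fun i => w i ≠ 0) S
      have h2 : (Finset.univ.filter fun i => w i ≠ 0).card = k := by exact_mod_cast hwc
      omega
  have hAx := h2.le_nrm_mulVec hx'sp
  have hres : nrm (y - A.mulVec x') ≤ nrm (y - A.mulVec v) :=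
    le_of_abs_le <| abs_le_of_sq_le_sq (hopt w'
      (fun i => by by_cases hi : i ∈ S <;> simp [hw', hi]) (by simp [hw', hSc])) (nrm_nonneg _)
  have hlow : nrm (A.mulVec (x' - xs)) ≤ nrm η + nrm (y - A.mulVec x') := by
    have : A.mulVec (x' - xs) = η - (y - A.mulVec x') := by
      rw [hη, Matrix.mulVec_sub]; abel
    rw [this]; exact nrm_sub_le _ _
  have hup : nrm (y - A.mulVec v) ≤ nrm η + nrm (A.mulVec (v - xs)) := by
    have : y - A.mulVec v = η - A.mulVec (v - xs) := by
      rw [hη, Matrix.mulVec_sub]; abel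
    rw [this]; exact nrm_sub_le _ _
  have hpos : 0 < 1 - δ₂ := by linarith [h2.2.1]
  set b := Real.sqrt (1 - δ₂) with hb
  have hb0 : 0 < b := Real.sqrt_pos.2 hpos
  set a := Real.sqrt (1 + δ₁) with ha
  have ha0 : 0 ≤ a := Real.sqrt_nonneg _
  have ha2 : a ^ 2 = 1 + δ₁ := Real.sq_sqrt (by linarith [h1.1])
  have hmain : b * nrm (x' - xs) ≤ a * (2 * E) + 2 * nrm η := by
    linarith [mul_le_mul_of_nonneg_left hvE ha0]
  set c := (Real.sqrt 5 + 1) / 2 * ((t : ℝ) + 1) with hc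
  have hc2 : 2 ≤ c := by
    have h5 : 1 ≤ Real.sqrt 5 := Real.one_le_sqrt.2 (by norm_num)
    have htq : (1 : ℝ) ≤ t := by
      have hkpos : (0 : ℝ) < k := by exact_mod_cast hk
      have : (1 : ℝ) ≤ (q : ℝ) / k := by
        rw [le_div_iff₀ hkpos, one_mul]; exact_mod_cast (by omega : k ≤ q)
      rw [ht]; exact this.trans (Nat.le_ceil _)
    rw [hc]; nlinarith
  have hδ3 := h3.1
  have hD0 := nrm_nonneg D
  have hη0 := nrm_nonneg η
  have hρ' : ρ = c * δ₃ * a / b := by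
    rw [hρ, Real.sqrt_div (by linarith [h1.1])]; ring
  have hτ' : τ = (c * (1 + δ₂) + 2) / b := by
    rw [hτ, hc]; field_simp; ring
  have hfin : a * (2 * E) + 2 * nrm η ≤
      c * δ₃ * a * nrm D + (c * (1 + δ₂) + 2) * nrm η := by
    have e1 : 2 * (δ₃ * a * nrm D) ≤ c * (δ₃ * a * nrm D) :=
      mul_le_mul_of_nonneg_right hc2 (by positivity)
    have e2 : 2 * a ^ 2 ≤ c * (1 + δ₂) := by
      rw [ha2]
      exact mul_le_mul hc2 (by linarith) (by linarith [h1.1]) (by linarith)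
    have e3 := mul_le_mul_of_nonneg_right e2 hη0
    have e4 : a * (2 * E) = 2 * (δ₃ * a * nrm D) + 2 * a ^ 2 * nrm η := by rw [hE]; ring
    rw [e4]; linarith
  rw [hρ', hτ', div_mul_eq_mul_div, div_mul_eq_mul_div, ← add_div, le_div_iff₀ hb0]
  linarith
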